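/- arXiv:1812.03739 — 2 statements merged into one kernel-verified Lean document; each statement's English description precedes it below -/
import Mathlib

section
/- Let A ∈ ℝ^{m×n} have columns of unit ℓ2-norm and mutual coherence μ, let k ≥ 2 be an integer with μ < 1/(2k−1), let b = Ax + z with ‖z‖₂ ≤ ε, let λ > 0, and let x^♯ be a minimizer of u ↦ ‖u‖₁ + (1/(2λ))‖b − Au‖₂². Then ‖x^♯ − x‖₂ ≤ C₃·‖x − x_[k]‖₁ + C₄, where C₃ = (2√k·α₁·f_k(α₂)·λ + 2·g_k(α₂)·ε)/(√k·(1 − √k·α₂)·(√k·α₁·λ + ε)) and C₄ = (√k·α₁·(5 + 2√k·α₂)·λ + 2·g_k(α₂)·ε)·(√k·α₁·λ + ε)/(√k·(1 − √k·α₂)·λ), with α₁ = √(1+(k−1)μ)/(1−(k−1)μ), α₂ = √k·μ/(1−(k−1)μ), f_k(t) = k t² + 3√k t + 3, and g_k(t) = 2k t² + 4√k t + 1. -/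
noncomputable def l2norm {ι : Type*} [Fintype ι] (v : ι → ℝ) : ℝ :=
  Real.sqrt (∑ i, (v i) ^ 2)

noncomputable def l1norm {ι : Type*} [Fintype ι] (v : ι → ℝ) : ℝ :=
  ∑ i, |v i|

noncomputable def linfnorm {ι : Type*} [Fintype ι] (v : ι → ℝ) : ℝ :=
  ⨆ i, |v i|

/-- The mutual coherence of a matrix: the largest absolute inner product
between two distinct columns. -/
noncomputable def mutualCoherence {m n : ℕ} (A : Matrix (Fin m) (Fin n) ℝ) : ℝ :=
  ⨆ p : {p : Fin n × Fin n // p.1 ≠ p.2}, |∑ r, A r p.1.1 * A r p.1.2|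

/-- `restrict v E` agrees with `v` on `E` and vanishes outside of `E`. -/
def restrict {n : ℕ} (v : Fin n → ℝ) (E : Finset (Fin n)) : Fin n → ℝ :=
  fun i => if i ∈ E then v i else 0

/-- A vector is `k`-sparse if it has at most `k` nonzero entries. -/
def sparse {n : ℕ} (k : ℕ) (v : Fin n → ℝ) : Prop :=
  (Finset.univ.filter fun i => v i ≠ 0).card ≤ k

noncomputable def alpha1 (k : ℕ) (μ : ℝ) : ℝ :=
  Real.sqrt (1 + ((k : ℝ) - 1) * μ) / (1 - ((k : ℝ) - 1) * μ)

noncomputable def alpha2 (k : ℕ) (μ : ℝ) : ℝ :=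
  Real.sqrt k * μ / (1 - ((k : ℝ) - 1) * μ)

noncomputable def fk (k : ℕ) (t : ℝ) : ℝ :=
  (k : ℝ) * t ^ 2 + 3 * Real.sqrt k * t + 3

noncomputable def gk (k : ℕ) (t : ℝ) : ℝ :=
  2 * (k : ℝ) * t ^ 2 + 4 * Real.sqrt k * t + 1

lemma aux_top {n : ℕ} (h : Fin n → ℝ) (k : ℕ) : ∃ F : Finset (Fin n), ∃ M : ℝ, 0 ≤ M ∧
    F.card ≤ k ∧ (∀ i ∈ F, M ≤ |h i|) ∧ (∀ i, i ∉ F → |h i| ≤ M) ∧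
    (F.card = k ∨ F = Finset.univ) := by
  induction k with
  | zero =>
    refine ⟨∅, ∑ i, |h i|, Finset.sum_nonneg fun i _ => abs_nonneg _, by simp, by simp, ?_,
      Or.inl (by simp)⟩
    intro i _
    exact Finset.single_le_sum (f := fun i => |h i|) (fun i _ => abs_nonneg _) (Finset.mem_univ i)
  | succ k ih =>
    obtain ⟨F, M, hM, hc, h1, h2, h3⟩ := ih
    by_cases hF : F = Finset.univ
    · exact ⟨F, M, hM, by omega, h1, h2, Or.inr hF⟩
    · have hcard : F.card = k := h3.resolve_right hF
      have hne : (Fᶜ).Nonempty := by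
        rw [Finset.nonempty_iff_ne_empty]
        intro h0
        exact hF (by simpa using h0)
      obtain ⟨j, hj, hmax⟩ := Finset.exists_max_image Fᶜ (fun i => |h i|) hne
      have hjF : j ∉ F := by simpa using hj
      refine ⟨insert j F, |h j|, abs_nonneg _, ?_, ?_, ?_, Or.inl ?_⟩
      · rw [Finset.card_insert_of_notMem hjF]; omega
      · intro i hi
        rcases Finset.mem_insert.1 hi with rfl | hi
        · exact le_rfl
        · exact (h2 j hjF).trans (h1 i hi)
      · intro i hi
        apply hmax
        simp only [Finset.mem_insert, not_or] at hi
        simpa using hi.2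
      · rw [Finset.card_insert_of_notMem hjF]; omega

lemma aux_cmp {n : ℕ} (h : Fin n → ℝ) (k : ℕ) (F E : Finset (Fin n)) (M : ℝ) (hM : 0 ≤ M)
    (h1 : ∀ i ∈ F, M ≤ |h i|) (h2 : ∀ i, i ∉ F → |h i| ≤ M)
    (h3 : F.card = k ∨ F = Finset.univ) (hE : E.card ≤ k) :
    ∑ i ∈ E, |h i| ≤ ∑ i ∈ F, |h i| := by
  rcases h3 with h3 | h3
  · have key : ∑ i ∈ E, (|h i| - M) ≤ ∑ i ∈ F, (|h i| - M) := by
      have e : ∀ S : Finset (Fin n), ∑ i ∈ S, (|h i| - M) =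
          ∑ i, if i ∈ S then (|h i| - M) else 0 := by
        intro S
        rw [Finset.sum_ite_mem, Finset.univ_inter]
      rw [e E, e F]
      refine Finset.sum_le_sum fun i _ => ?_
      have g1 := h1 i
      have g2 := h2 i
      by_cases hiE : i ∈ E <;> by_cases hiF : i ∈ F <;> simp [hiE, hiF]
      · exact g2 hiF
      · exact g1 hiF
    rw [Finset.sum_sub_distrib, Finset.sum_sub_distrib] at key
    simp only [Finset.sum_const, nsmul_eq_mul] at key
    have : (E.card : ℝ) ≤ F.card := by rw [h3]; exact_mod_cast hE
    nlinarith
  · rw [h3]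
    exact Finset.sum_le_sum_of_subset_of_nonneg (Finset.subset_univ _) fun i _ _ => abs_nonneg _

lemma aux_gram {m n : ℕ} (A : Matrix (Fin m) (Fin n) ℝ) (h : Fin n → ℝ) (S T : Finset (Fin n)) :
    ∑ r, (∑ i ∈ S, A r i * h i) * (∑ j ∈ T, A r j * h j) =
      ∑ i ∈ S, ∑ j ∈ T, h i * h j * ∑ r, A r i * A r j := by
  simp_rw [Finset.sum_mul_sum, Finset.mul_sum]
  rw [Finset.sum_comm]
  refine Finset.sum_congr rfl fun i _ => ?_
  rw [Finset.sum_comm]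
  refine Finset.sum_congr rfl fun j _ => Finset.sum_congr rfl fun r _ => by ring

lemma aux_diag {n : ℕ} (G : Fin n → Fin n → ℝ) (μ : ℝ)
    (hG1 : ∀ i, G i i = 1) (hG : ∀ i j, i ≠ j → |G i j| ≤ μ) (h : Fin n → ℝ)
    (S : Finset (Fin n)) :
    |∑ i ∈ S, ∑ j ∈ S, h i * h j * G i j - ∑ i ∈ S, h i ^ 2| ≤
      μ * ((∑ i ∈ S, |h i|) ^ 2 - ∑ i ∈ S, h i ^ 2) := by
  have e1 : ∑ i ∈ S, h i ^ 2 = ∑ i ∈ S, ∑ j ∈ S, if i = j then h i ^ 2 else 0 := by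
    refine Finset.sum_congr rfl fun i hi => ?_
    simp [hi]
  rw [e1, pow_two (∑ i ∈ S, |h i|), Finset.sum_mul_sum, ← Finset.sum_sub_distrib,
    ← Finset.sum_sub_distrib, Finset.mul_sum]
  refine (Finset.abs_sum_le_sum_abs _ _).trans (Finset.sum_le_sum fun i _ => ?_)
  rw [← Finset.sum_sub_distrib, ← Finset.sum_sub_distrib, Finset.mul_sum]
  refine (Finset.abs_sum_le_sum_abs _ _).trans (Finset.sum_le_sum fun j _ => ?_)
  by_cases hij : i = j
  · subst hij
    simp [hG1, ← pow_two]
  · simp only [hij, if_false, sub_zero, abs_mul]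
    rw [mul_comm μ]
    exact mul_le_mul_of_nonneg_left (hG i j hij) (by positivity)

lemma aux_off {n : ℕ} (G : Fin n → Fin n → ℝ) (μ : ℝ)
    (hG : ∀ i j, i ≠ j → |G i j| ≤ μ) (h : Fin n → ℝ) (S : Finset (Fin n)) :
    |∑ i ∈ S, ∑ j ∈ Sᶜ, h i * h j * G i j| ≤ μ * ((∑ i ∈ S, |h i|) * ∑ i ∈ Sᶜ, |h i|) := by
  rw [Finset.sum_mul_sum, Finset.mul_sum]
  refine (Finset.abs_sum_le_sum_abs _ _).trans (Finset.sum_le_sum fun i hi => ?_)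
  rw [Finset.mul_sum]
  refine (Finset.abs_sum_le_sum_abs _ _).trans (Finset.sum_le_sum fun j hj => ?_)
  have hij : i ≠ j := by
    rintro rfl
    exact (Finset.mem_compl.1 hj) hi
  simp only [abs_mul]
  rw [mul_comm μ]
  exact mul_le_mul_of_nonneg_left (hG i j hij) (by positivity)

lemma aux_sq {ι : Type*} [Fintype ι] (v : ι → ℝ) : l2norm v ^ 2 = ∑ i, v i ^ 2 :=
  Real.sq_sqrt (Finset.sum_nonneg fun _ _ => sq_nonneg _)

lemma aux_cs {ι : Type*} [Fintype ι] (u v : ι → ℝ) : ∑ i, u i * v i ≤ l2norm u * l2norm v :=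
  Real.sum_mul_le_sqrt_mul_sqrt _ _ _

lemma aux_mu {m n : ℕ} (A : Matrix (Fin m) (Fin n) ℝ) (i j : Fin n) (hij : i ≠ j) :
    |∑ r, A r i * A r j| ≤ mutualCoherence A :=
  le_ciSup (f := fun p : {p : Fin n × Fin n // p.1 ≠ p.2} => |∑ r, A r p.1.1 * A r p.1.2|)
    (Set.finite_range _).bddAbove ⟨(i, j), hij⟩

lemma aux_mu0 {m n : ℕ} (A : Matrix (Fin m) (Fin n) ℝ) : 0 ≤ mutualCoherence A :=
  Real.iSup_nonneg fun _ => abs_nonneg _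

/-- The local estimate on a set of size at most `k`. -/
lemma aux_local {m n : ℕ} (A : Matrix (Fin m) (Fin n) ℝ)
    (hA : ∀ j, l2norm (fun i => A i j) = 1) (k : ℕ) (hk : 2 ≤ k)
    (hc : 0 < 1 - ((k : ℝ) - 1) * mutualCoherence A)
    (h : Fin n → ℝ) (F : Finset (Fin n)) (hF : F.card ≤ k) :
    Real.sqrt (∑ i ∈ F, h i ^ 2) ≤ alpha1 k (mutualCoherence A) * l2norm (A.mulVec h)
      + alpha2 k (mutualCoherence A) * ∑ i ∈ Fᶜ, |h i| := by
  have hG := aux_mu A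
  have hμ := aux_mu0 A
  have hG1 : ∀ i, ∑ r, A r i * A r i = 1 := by
    intro i
    have := aux_sq (fun r => A r i)
    rw [hA i] at this
    simp only [← pow_two]; linarith
  unfold alpha1 alpha2
  set μ := mutualCoherence A
  set p := ∑ i ∈ Fᶜ, |h i| with hp
  set q := ∑ i ∈ F, |h i| with hq
  set t := l2norm (A.mulVec h) with ht
  set N := Real.sqrt (∑ i ∈ F, h i ^ 2) with hN
  have hN2 : N ^ 2 = ∑ i ∈ F, h i ^ 2 := Real.sq_sqrt (Finset.sum_nonneg fun _ _ => sq_nonneg _)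
  have hN0 : 0 ≤ N := Real.sqrt_nonneg _
  have hp0 : 0 ≤ p := Finset.sum_nonneg fun _ _ => abs_nonneg _
  have hq0 : 0 ≤ q := Finset.sum_nonneg fun _ _ => abs_nonneg _
  have hk1 : (2 : ℝ) ≤ k := by exact_mod_cast hk
  have hq2 : q ^ 2 ≤ k * N ^ 2 := by
    have := sq_sum_le_card_mul_sum_sq (s := F) (f := fun i => |h i|)
    simp only [sq_abs] at this
    rw [← hN2] at this
    have h4 : (F.card : ℝ) ≤ k := by exact_mod_cast hF
    exact this.trans (mul_le_mul_of_nonneg_right h4 (sq_nonneg _))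
  have hqN : q ≤ Real.sqrt k * N := by
    refine le_of_abs_le (abs_le_of_sq_le_sq ?_ (by positivity))
    rw [mul_pow, Real.sq_sqrt (by positivity)]; exact hq2
  set u : Fin m → ℝ := fun r => ∑ i ∈ F, A r i * h i with hu
  have hd := aux_diag (fun i j => ∑ r, A r i * A r j) μ hG1 hG h F
  have ho := aux_off (fun i j => ∑ r, A r i * A r j) μ hG h F
  rw [← aux_gram] at hd ho
  rw [← hN2] at hd
  have hU : l2norm u ^ 2 = ∑ r, (∑ i ∈ F, A r i * h i) * (∑ i ∈ F, A r i * h i) := by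
    rw [aux_sq]; simp only [hu, pow_two]
  rw [← hU] at hd
  have huy : ∑ r, u r * A.mulVec h r = l2norm u ^ 2 +
      ∑ r, (∑ i ∈ F, A r i * h i) * (∑ j ∈ Fᶜ, A r j * h j) := by
    rw [hU, ← Finset.sum_add_distrib]
    refine Finset.sum_congr rfl fun r _ => ?_
    rw [← mul_add, Finset.sum_add_sum_compl]
    rfl
  have hcs := aux_cs u (A.mulVec h)
  rw [huy, ← ht] at hcs
  have hd1 := abs_le.1 hd
  have ho1 := abs_le.1 ho
  have ht0 : 0 ≤ t := Real.sqrt_nonneg _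
  have hb : μ * (q ^ 2 - N ^ 2) ≤ ((k : ℝ) - 1) * μ * N ^ 2 := by nlinarith
  have hU1 : l2norm u ≤ Real.sqrt (1 + ((k : ℝ) - 1) * μ) * N := by
    have h5 : 0 ≤ 1 + ((k : ℝ) - 1) * μ := by nlinarith
    refine le_of_abs_le (abs_le_of_sq_le_sq ?_ (by positivity))
    rw [mul_pow, Real.sq_sqrt h5]
    linarith [hd1.2]
  have hfin : (1 - ((k : ℝ) - 1) * μ) * N ^ 2 ≤
      (Real.sqrt (1 + ((k : ℝ) - 1) * μ) * t + Real.sqrt k * μ * p) * N := by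
    have h6 := mul_le_mul_of_nonneg_right hU1 ht0
    have h7 := mul_le_mul_of_nonneg_left (mul_le_mul_of_nonneg_right hqN hp0) hμ
    linarith [hd1.1, ho1.1]
  have : N ≤ (Real.sqrt (1 + ((k : ℝ) - 1) * μ) * t + Real.sqrt k * μ * p) /
      (1 - ((k : ℝ) - 1) * μ) := by
    rw [le_div_iff₀ hc]
    rcases hN0.eq_or_lt with h0 | h0
    · rw [← h0]; simp only [zero_mul]; positivity
    · nlinarith
  refine this.trans (le_of_eq ?_)
  ring

lemma aux_final (s a lam ε D p q t σ H R : ℝ) (hs0 : 0 ≤ s) (hs : s < 1) (ha : 0 < a)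
    (hlam : 0 < lam) (hε : 0 ≤ ε) (hR : 0 < R) (hD : D = a * lam + ε) (hp : 0 ≤ p) (ht : 0 ≤ t)
    (hσ : 0 ≤ σ) (hq : q ≤ a * t + s * p)
    (hopt : t ^ 2 - 2 * ε * t ≤ 2 * lam * (q - p + 2 * σ))
    (hH : R * H ≤ (a * t + s * p) + (p + q) / 2) :
    H ≤ (2 * a * (s ^ 2 + 3 * s + 3) * lam + 2 * (2 * s ^ 2 + 4 * s + 1) * ε) /
        (R * (1 - s) * D) * σ +
      (a * (5 + 2 * s) * lam + 2 * (2 * s ^ 2 + 4 * s + 1) * ε) * D / (R * (1 - s) * lam) := by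
  have hal : 0 < a * lam := mul_pos ha hlam
  have hD0 : 0 < D := by linarith
  have h1s : 0 < 1 - s := by linarith
  have hq' := mul_le_mul_of_nonneg_left hq hlam.le
  have e1 : t ^ 2 - 2 * D * t + 2 * lam * ((1 - s) * p) ≤ 4 * lam * σ := by
    subst hD; nlinarith
  -- bound on p
  have e2 : (1 - s) * p ≤ 2 * σ + D ^ 2 / (2 * lam) := by
    have : (1 - s) * p - 2 * σ ≤ D ^ 2 / (2 * lam) := by
      rw [le_div_iff₀ (by positivity)]
      nlinarith [sq_nonneg (t - D)]
    linarith
  -- bound on t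
  have e3 : t ≤ 2 * D + 2 * lam * σ / D := by
    have h0 : 0 ≤ 2 * lam * σ / D := by positivity
    have h1 : D * (2 * lam * σ / D) = 2 * lam * σ := by field_simp
    have h2 : 0 ≤ lam * ((1 - s) * p) := by positivity
    by_contra hcon
    push Not at hcon
    nlinarith
  have e4 : (1 - s) * (R * H) ≤ 3 / 2 * (1 - s) * a * (2 * D + 2 * lam * σ / D) +
      (3 / 2 * s + 1 / 2) * (2 * σ + D ^ 2 / (2 * lam)) := by
    have h1 : R * H ≤ 3 / 2 * (a * t) + (3 / 2 * s + 1 / 2) * p := by linarith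
    have h2 := mul_le_mul_of_nonneg_left h1 h1s.le
    have h3 := mul_le_mul_of_nonneg_left e3 (show 0 ≤ 3 / 2 * (1 - s) * a by positivity)
    have h4 := mul_le_mul_of_nonneg_left e2 (show 0 ≤ 3 / 2 * s + 1 / 2 by positivity)
    linarith
  have e5 : (2 * a * (s ^ 2 + 3 * s + 3) * lam + 2 * (2 * s ^ 2 + 4 * s + 1) * ε) /
        (R * (1 - s) * D) * σ +
      (a * (5 + 2 * s) * lam + 2 * (2 * s ^ 2 + 4 * s + 1) * ε) * D / (R * (1 - s) * lam) =
      ((2 * a * (s ^ 2 + 3 * s + 3) * lam + 2 * (2 * s ^ 2 + 4 * s + 1) * ε) * (σ / D) +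
      (a * (5 + 2 * s) * lam + 2 * (2 * s ^ 2 + 4 * s + 1) * ε) * (D / lam)) /
        ((1 - s) * R) := by
    field_simp
  rw [e5, le_div_iff₀ (by positivity)]
  have hX : 0 ≤ σ / D := by positivity
  have hY : 0 ≤ D / lam := by positivity
  have e6 : 3 / 2 * (1 - s) * a * (2 * D + 2 * lam * σ / D) +
      (3 / 2 * s + 1 / 2) * (2 * σ + D ^ 2 / (2 * lam)) =
      (3 * (1 - s) * a * lam + (3 * s + 1) * D) * (σ / D) +
      (3 * (1 - s) * a * lam + (3 / 4 * s + 1 / 4) * D) * (D / lam) := by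
    field_simp
    ring
  rw [e6] at e4
  have hals : 0 ≤ a * lam * s := by positivity
  have hes : 0 ≤ ε * s := by positivity
  have hess : 0 ≤ ε * s ^ 2 := by positivity
  have hass : 0 ≤ a * lam * s ^ 2 := by positivity
  have e7 : (3 * (1 - s) * a * lam + (3 * s + 1) * D) ≤
    (2 * a * (s ^ 2 + 3 * s + 3) * lam + 2 * (2 * s ^ 2 + 4 * s + 1) * ε) := by
    subst hD; nlinarith
  have e8 : (3 * (1 - s) * a * lam + (3 / 4 * s + 1 / 4) * D) ≤
    (a * (5 + 2 * s) * lam + 2 * (2 * s ^ 2 + 4 * s + 1) * ε) := by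
    subst hD; nlinarith
  have := mul_le_mul_of_nonneg_right e7 hX
  have := mul_le_mul_of_nonneg_right e8 hY
  linarith

theorem stmt_6 {m n : ℕ} (A : Matrix (Fin m) (Fin n) ℝ)
    (hA : ∀ j, l2norm (fun i => A i j) = 1)
    (k : ℕ) (hk : 2 ≤ k)
    (hμ : mutualCoherence A < 1 / (2 * (k : ℝ) - 1))
    (x : Fin n → ℝ) (z : Fin m → ℝ) (b : Fin m → ℝ) (hb : b = A.mulVec x + z)
    (ε lam : ℝ) (hz : l2norm z ≤ ε) (hlam : 0 < lam)
    (xs : Fin n → ℝ)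
    (hmin : ∀ u : Fin n → ℝ,
      l1norm xs + 1 / (2 * lam) * l2norm (b - A.mulVec xs) ^ 2 ≤
        l1norm u + 1 / (2 * lam) * l2norm (b - A.mulVec u) ^ 2)
    (xk : Fin n → ℝ) (hxk1 : sparse k xk)
    (hxk2 : ∀ y : Fin n → ℝ, sparse k y → l2norm (xk - x) ≤ l2norm (y - x)) :
    l2norm (xs - x) ≤
      (2 * Real.sqrt k * alpha1 k (mutualCoherence A) * fk k (alpha2 k (mutualCoherence A)) * lam
          + 2 * gk k (alpha2 k (mutualCoherence A)) * ε)
        / (Real.sqrt k * (1 - Real.sqrt k * alpha2 k (mutualCoherence A))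
          * (Real.sqrt k * alpha1 k (mutualCoherence A) * lam + ε)) * l1norm (x - xk)
      + (Real.sqrt k * alpha1 k (mutualCoherence A)
            * (5 + 2 * Real.sqrt k * alpha2 k (mutualCoherence A)) * lam
          + 2 * gk k (alpha2 k (mutualCoherence A)) * ε)
        * (Real.sqrt k * alpha1 k (mutualCoherence A) * lam + ε)
        / (Real.sqrt k * (1 - Real.sqrt k * alpha2 k (mutualCoherence A)) * lam) := by
  have hmu0 := aux_mu0 A
  have hk1 : (2 : ℝ) ≤ k := by exact_mod_cast hk
  rw [lt_div_iff₀ (by linarith)] at hμ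
  have hc : 0 < 1 - ((k : ℝ) - 1) * mutualCoherence A := by nlinarith
  have hε : 0 ≤ ε := (Real.sqrt_nonneg _).trans hz
  set R := Real.sqrt (k : ℝ) with hRdef
  have hR : 0 < R := Real.sqrt_pos.2 (by linarith)
  have hR2 : R ^ 2 = k := Real.sq_sqrt (by linarith)
  set h : Fin n → ℝ := xs - x with hh
  obtain ⟨F, M, hM, hFc, h1, h2, h3⟩ := aux_top h k
  have hloc := aux_local A hA k hk hc h F hFc
  set a1 := alpha1 k (mutualCoherence A) with ha1
  set a2 := alpha2 k (mutualCoherence A) with ha2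
  have ha1p : 0 < a1 := by
    rw [ha1, alpha1]
    exact div_pos (Real.sqrt_pos.2 (by nlinarith)) hc
  have hs0 : 0 ≤ R * a2 := by
    rw [ha2, alpha2]
    exact mul_nonneg hR.le (div_nonneg (mul_nonneg hR.le hmu0) hc.le)
  have hs1 : R * a2 < 1 := by
    have : R * a2 = k * mutualCoherence A / (1 - ((k : ℝ) - 1) * mutualCoherence A) := by
      rw [ha2, alpha2, ← hRdef, ← hR2]; ring
    rw [this, div_lt_one hc]
    linarith
  set t := l2norm (A.mulVec h) with ht
  have ht0 : 0 ≤ t := Real.sqrt_nonneg _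
  set p := ∑ i ∈ Fᶜ, |h i| with hp
  set q := ∑ i ∈ F, |h i| with hq
  have hp0 : 0 ≤ p := Finset.sum_nonneg fun _ _ => abs_nonneg _
  have hq0 : 0 ≤ q := Finset.sum_nonneg fun _ _ => abs_nonneg _
  set N := Real.sqrt (∑ i ∈ F, h i ^ 2) with hN
  have hN2 : N ^ 2 = ∑ i ∈ F, h i ^ 2 := Real.sq_sqrt (Finset.sum_nonneg fun _ _ => sq_nonneg _)
  have hN0 : 0 ≤ N := Real.sqrt_nonneg _
  have hqN : q ≤ R * N := by
    refine le_of_abs_le (abs_le_of_sq_le_sq ?_ (by positivity))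
    rw [mul_pow, hR2]
    have := sq_sum_le_card_mul_sum_sq (s := F) (f := fun i => |h i|)
    simp only [sq_abs] at this
    rw [← hN2] at this
    have h4 : (F.card : ℝ) ≤ k := by exact_mod_cast hFc
    exact this.trans (mul_le_mul_of_nonneg_right h4 (sq_nonneg _))
  have hRN : R * N ≤ R * a1 * t + R * a2 * p := by
    have := mul_le_mul_of_nonneg_left hloc hR.le
    linarith
  -- tail bound
  have htail : k * ∑ i ∈ Fᶜ, h i ^ 2 ≤ q * p := by
    rcases h3 with h3 | h3
    · have g1 : ∑ i ∈ Fᶜ, h i ^ 2 ≤ M * p := by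
        rw [hp, Finset.mul_sum]
        refine Finset.sum_le_sum fun i hi => ?_
        rw [← sq_abs, pow_two]
        exact mul_le_mul_of_nonneg_right (h2 i (Finset.mem_compl.1 hi)) (abs_nonneg _)
      have g2 : k * M ≤ q := by
        have := Finset.card_nsmul_le_sum F (fun i => |h i|) M h1
        rwa [h3, nsmul_eq_mul] at this
      have g3 := mul_le_mul_of_nonneg_left g1 (show (0 : ℝ) ≤ k by linarith)
      have g4 := mul_le_mul_of_nonneg_right g2 hp0
      linarith
    · have : Fᶜ = ∅ := by simp [h3]
      rw [this, Finset.sum_empty, mul_zero]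
      positivity
  have hH : R * l2norm h ≤ (R * a1 * t + R * a2 * p) + (p + q) / 2 := by
    refine le_trans ?_ (add_le_add_left hRN _)
    refine le_of_abs_le (abs_le_of_sq_le_sq ?_ (by positivity))
    rw [mul_pow, aux_sq, hR2, ← Finset.sum_add_sum_compl F, ← hN2, mul_add]
    have : 0 ≤ R * N * ((p + q) / 2) := by positivity
    nlinarith [sq_nonneg (p - q)]
  -- optimality
  have hopt : t ^ 2 - 2 * ε * t ≤ 2 * lam * (q - p + 2 * l1norm (x - xk)) := by
    have hm := hmin x
    have b1 : b - A.mulVec x = z := by rw [hb]; simp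
    have b2 : b - A.mulVec xs = z - A.mulVec h := by
      rw [hb, hh, Matrix.mulVec_sub]; abel
    rw [b1, b2] at hm
    have b3 : l2norm (z - A.mulVec h) ^ 2 = l2norm z ^ 2 - 2 * (∑ i, z i * A.mulVec h i) + t ^ 2 := by
      rw [ht, aux_sq, aux_sq, aux_sq, Finset.mul_sum, ← Finset.sum_sub_distrib,
        ← Finset.sum_add_distrib]
      refine Finset.sum_congr rfl fun i _ => ?_
      simp only [Pi.sub_apply]; ring
    have b4 := aux_cs z (A.mulVec h)
    have b5 := mul_le_mul_of_nonneg_right hz ht0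
    rw [← ht] at b4
    rw [b3] at hm
    have b6 : l1norm x - l1norm xs ≤ q - p + 2 * l1norm (x - xk) := by
      set E := Finset.univ.filter fun i => xk i ≠ 0 with hE
      have c1 := aux_cmp h k F E M hM h1 h2 h3 hxk1
      have c2 : q + p = ∑ i, |h i| := Finset.sum_add_sum_compl F _
      have c3 : l1norm x - l1norm xs ≤
          2 * (∑ i ∈ E, |h i|) - ∑ i, |h i| + 2 * l1norm (x - xk) := by
        rw [hE, Finset.sum_filter]
        unfold l1norm
        rw [Finset.mul_sum, Finset.mul_sum, ← Finset.sum_sub_distrib, ← Finset.sum_sub_distrib,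
          ← Finset.sum_add_distrib]
        refine Finset.sum_le_sum fun i _ => ?_
        have d1 : h i = xs i - x i := rfl
        have d2 : (x - xk) i = x i - xk i := rfl
        rw [d1, d2]
        by_cases hi : xk i = 0
        · simp only [hi, ne_eq, not_true_eq_false, if_false, sub_zero]
          have := abs_sub (xs i) (x i)
          linarith
        · simp only [hi, ne_eq, not_false_eq_true, if_true]
          have := abs_sub_abs_le_abs_sub (x i) (xs i)
          rw [abs_sub_comm] at this
          have := abs_nonneg (x i - xk i)
          linarith
      linarith
    have b7 := mul_le_mul_of_nonneg_left b6 (show 0 ≤ 2 * lam by positivity)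
    have b8 := mul_le_mul_of_nonneg_left hm (show 0 ≤ 2 * lam by positivity)
    have b9 : ∀ y : ℝ, 2 * lam * (1 / (2 * lam) * y) = y := by
      intro y; field_simp
    rw [mul_add (2 * lam) (l1norm xs), mul_add (2 * lam) (l1norm x), b9, b9] at b8
    linarith
  have hσ : 0 ≤ l1norm (x - xk) := Finset.sum_nonneg fun _ _ => abs_nonneg _
  have key := aux_final (R * a2) (R * a1) lam ε (R * a1 * lam + ε) p q t (l1norm (x - xk))
    (l2norm h) R hs0 hs1 (mul_pos hR ha1p) hlam hε hR rfl hp0 ht0 hσ (hqN.trans hRN) hopt hH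
  refine key.trans (le_of_eq ?_)
  have hf : fk k a2 = (R * a2) ^ 2 + 3 * (R * a2) + 3 := by
    rw [fk, ← hRdef, ← hR2]; ring
  have hg : gk k a2 = 2 * (R * a2) ^ 2 + 4 * (R * a2) + 1 := by
    rw [gk, ← hRdef, ← hR2]; ring
  rw [hf, hg]
  simp only [mul_assoc]
end

section
/- Let A ∈ ℝ^{m×n} with n = l·d be partitioned into l consecutive orthonormal column blocks A[1],…,A[l] ∈ ℝ^{m×d} (i.e., (A[i])ᵀA[i] = I_d for all i), with block coherence μ_B satisfying μ_B < 1/((2k−1)d) for an integer k ≥ 2. Let b = Ax + z with ‖z‖₂ ≤ ε, let λ > 0, and let x^♯ be a minimizer of u ↦ ‖u‖_{2,1} + (1/(2λ))‖b − Au‖₂². Then ‖x^♯ − x‖₂ ≤ C₃·‖x − x_{{k}}‖_{2,1} + C₄, where C₃ = (2√k·β₁·f_k(β₂)·λ + 2·g_k(β₂)·ε)/(√k·(1 − √k·β₂)·(√k·β₁·λ + ε)) and C₄ = (√k·β₁·(5 + 2√k·β₂)·λ + 2·g_k(β₂)·ε)·(√k·β₁·λ + ε)/(√k·(1 − √k·β₂)·λ),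 with β₁ = √(1+(k−1)d·μ_B)/(1−(k−1)d·μ_B), β₂ = √k·d·μ_B/(1−(k−1)d·μ_B), f_k(t) = k t² + 3√k t + 3, and g_k(t) = 2k t² + 4√k t + 1. -/
/-- The `i`-th column block of a matrix whose columns are indexed by `Fin l × Fin d`. -/
def blk {m l d : ℕ} (A : Matrix (Fin m) (Fin l × Fin d) ℝ) (i : Fin l) :
    Matrix (Fin m) (Fin d) ℝ :=
  Matrix.of fun r j => A r (i, j)

/-- The spectral (ℓ2 operator) norm of a square matrix. -/
noncomputable def specNorm {d : ℕ} (M : Matrix (Fin d) (Fin d) ℝ) : ℝ :=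
  ‖Matrix.toEuclideanCLM (𝕜 := ℝ) M‖

/-- The block coherence of `A`: the largest spectral norm of `(A[i])ᵀ A[j]` over
pairs of distinct blocks. -/
noncomputable def blockCoherence {m l d : ℕ} (A : Matrix (Fin m) (Fin l × Fin d) ℝ) : ℝ :=
  ⨆ p : {p : Fin l × Fin l // p.1 ≠ p.2}, specNorm ((blk A p.1.1).transpose * blk A p.1.2)

/-- A vector is block `k`-sparse if at most `k` of its blocks are nonzero. -/
def blockSparse {l d : ℕ} (k : ℕ) (v : Fin l × Fin d → ℝ) : Prop :=
  (Finset.univ.filter fun i : Fin l => (fun j => v (i, j)) ≠ 0).card ≤ k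

/-- The mixed ℓ2/ℓ1-norm `‖v‖_{2,1} = ∑ i, ‖v[i]‖₂`. -/
noncomputable def l21norm {l d : ℕ} (v : Fin l × Fin d → ℝ) : ℝ :=
  ∑ i : Fin l, l2norm (fun j => v (i, j))

noncomputable def beta1 (k d : ℕ) (μB : ℝ) : ℝ :=
  Real.sqrt (1 + ((k : ℝ) - 1) * d * μB) / (1 - ((k : ℝ) - 1) * d * μB)

noncomputable def beta2 (k d : ℕ) (μB : ℝ) : ℝ :=
  Real.sqrt k * d * μB / (1 - ((k : ℝ) - 1) * d * μB)

open Finset in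
theorem aux_core {ι E : Type*} [Fintype ι] [DecidableEq ι] [NormedAddCommGroup E]
    [InnerProductSpace ℝ E] (V : ι → E) (N : ι → ℝ) (hN : ∀ i, 0 ≤ N i)
    (hV : ∀ i, ‖V i‖ = N i) (ν : ℝ) (hν : 0 ≤ ν)
    (hVV : ∀ i j, i ≠ j → |inner ℝ (V i) (V j)| ≤ ν * N i * N j)
    (k : ℕ) (T : Finset ι) (hT : T.card ≤ k) :
    (1 - ((k : ℝ) - 1) * ν) * √(∑ i ∈ T, N i ^ 2) ≤
      √(1 + ((k : ℝ) - 1) * ν) * ‖∑ i, V i‖ + √k * ν * ∑ i ∈ Tᶜ, N i := by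
  set P := ∑ i ∈ T, N i ^ 2 with hP
  have hP0 : 0 ≤ P := sum_nonneg fun i _ => sq_nonneg _
  have hTk : (T.card : ℝ) ≤ k := by exact_mod_cast hT
  have hcs : (∑ i ∈ T, N i) ^ 2 ≤ k * P :=
    sq_sum_le_card_mul_sum_sq.trans (mul_le_mul_of_nonneg_right hTk hP0)
  set W := ∑ i ∈ T, V i with hW
  have hWW : ‖W‖ ^ 2 = ∑ i ∈ T, ∑ j ∈ T, inner ℝ (V i) (V j) := by
    rw [← real_inner_self_eq_norm_sq, hW, sum_inner]
    exact sum_congr rfl fun i _ => inner_sum _ _ _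
  have hself : ∀ i, inner ℝ (V i) (V i) = N i ^ 2 := fun i => by
    rw [real_inner_self_eq_norm_sq, hV]
  have e1 : ∀ c e : ℝ, ∑ i ∈ T, ∑ j ∈ T, (c * (N i * N j) + if i = j then e * N i ^ 2 else 0)
      = c * (∑ i ∈ T, N i) ^ 2 + e * P := by
    intro c e
    simp only [sum_add_distrib]
    congr 1
    · simp only [← mul_sum, sq, sum_mul_sum]
    · rw [hP, mul_sum]
      refine sum_congr rfl fun i hi => ?_
      simp [hi]
  have hup : ‖W‖ ^ 2 ≤ (1 + ((k : ℝ) - 1) * ν) * P := by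
    have : ‖W‖ ^ 2 ≤ ν * (∑ i ∈ T, N i) ^ 2 + (1 - ν) * P := by
      rw [hWW, ← e1]
      refine sum_le_sum fun i _ => sum_le_sum fun j _ => ?_
      split_ifs with h
      · subst h; rw [hself]; apply le_of_eq; ring
      · have := (abs_le.1 (hVV i j h)).2
        linarith
    nlinarith [mul_le_mul_of_nonneg_left hcs hν]
  have hlo : (1 - ((k : ℝ) - 1) * ν) * P ≤ ‖W‖ ^ 2 := by
    have : (-ν) * (∑ i ∈ T, N i) ^ 2 + (1 + ν) * P ≤ ‖W‖ ^ 2 := by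
      rw [hWW, ← e1]
      refine sum_le_sum fun i _ => sum_le_sum fun j _ => ?_
      split_ifs with h
      · subst h; rw [hself]; apply le_of_eq; ring
      · have := (abs_le.1 (hVV i j h)).1
        linarith
    nlinarith [mul_le_mul_of_nonneg_left hcs hν]
  set a := ∑ i ∈ Tᶜ, N i with ha
  have ha0 : 0 ≤ a := sum_nonneg fun i _ => hN i
  set p := √P with hp
  have hp0 : 0 ≤ p := Real.sqrt_nonneg _
  have hpp : p ^ 2 = P := Real.sq_sqrt hP0
  have hs1 : ∑ i ∈ T, N i ≤ √k * p := by
    rw [hp, ← Real.sqrt_mul (Nat.cast_nonneg k)]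
    exact Real.le_sqrt_of_sq_le hcs
  have hcross : -(∑ i ∈ T, ∑ j ∈ Tᶜ, inner ℝ (V i) (V j)) ≤ ν * (√k * p) * a := by
    have h1 : -(∑ i ∈ T, ∑ j ∈ Tᶜ, inner ℝ (V i) (V j)) ≤ ν * ((∑ i ∈ T, N i) * a) := by
      rw [ha, sum_mul_sum, mul_sum, ← sum_neg_distrib]
      refine sum_le_sum fun i hi => ?_
      rw [mul_sum, ← sum_neg_distrib]
      refine sum_le_sum fun j hj => ?_
      have hij : i ≠ j := by rintro rfl; exact (mem_compl.1 hj) hi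
      have := (abs_le.1 (hVV i j hij)).1
      linarith
    have := mul_le_mul_of_nonneg_left (mul_le_mul_of_nonneg_right hs1 ha0) hν
    linarith
  have hsplit : ∑ i, V i = W + ∑ j ∈ Tᶜ, V j := (sum_add_sum_compl T V).symm
  have hin : ‖W‖ ^ 2 = inner ℝ W (∑ i, V i) - ∑ i ∈ T, ∑ j ∈ Tᶜ, inner ℝ (V i) (V j) := by
    rw [hsplit, inner_add_right, real_inner_self_eq_norm_sq]
    have : inner ℝ W (∑ j ∈ Tᶜ, V j) = ∑ i ∈ T, ∑ j ∈ Tᶜ, inner ℝ (V i) (V j) := by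
      rw [hW, sum_inner]
      exact sum_congr rfl fun i _ => inner_sum _ _ _
    rw [this]; ring
  have hWn : ‖W‖ ≤ √(1 + ((k : ℝ) - 1) * ν) * p := by
    rw [hp, ← Real.sqrt_mul' _ hP0]
    exact Real.le_sqrt_of_sq_le hup
  have hcs2 : inner ℝ W (∑ i, V i) ≤ √(1 + ((k : ℝ) - 1) * ν) * p * ‖∑ i, V i‖ :=
    (real_inner_le_norm _ _).trans (mul_le_mul_of_nonneg_right hWn (norm_nonneg _))
  rcases hp0.eq_or_lt with h0 | h0
  · rw [← h0, mul_zero]; positivity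
  · refine le_of_mul_le_mul_right ?_ h0
    rw [← hpp] at hlo
    linarith

open Finset in
theorem aux_top_s19 {ι : Type*} [Fintype ι] [DecidableEq ι] (N : ι → ℝ) (hN : ∀ i, 0 ≤ N i)
    (k : ℕ) : ∃ T : Finset ι, T.card ≤ k ∧
      (∀ S : Finset ι, S.card ≤ k → ∑ i ∈ Tᶜ, N i ≤ ∑ i ∈ Sᶜ, N i) ∧
      ∀ i ∈ Tᶜ, √k * N i ≤ √(∑ i ∈ T, N i ^ 2) := by
  obtain ⟨T, hT, hmax⟩ := exists_max_image (univ.filter fun S : Finset ι => S.card ≤ k)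
    (fun S => ∑ i ∈ S, N i) ⟨∅, by simp⟩
  simp only [mem_filter, mem_univ, true_and] at hT hmax
  refine ⟨T, hT, fun S hS => ?_, fun i hi => ?_⟩
  · have h1 := sum_add_sum_compl T N
    have h2 := sum_add_sum_compl S N
    linarith [hmax S hS]
  · have hi := mem_compl.1 hi
    apply Real.le_sqrt_of_sq_le
    rw [mul_pow, Real.sq_sqrt (Nat.cast_nonneg k)]
    rcases hT.eq_or_lt with h | h
    · rw [← h, ← nsmul_eq_mul]
      refine card_nsmul_le_sum _ _ _ fun j hj => ?_
      refine pow_le_pow_left₀ (hN i) ?_ 2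
      have hi' : i ∉ T.erase j := fun h => hi (mem_of_mem_erase h)
      have := hmax (insert i (T.erase j)) (by
        rw [card_insert_of_notMem hi', card_erase_add_one hj]; exact hT)
      rw [sum_insert hi'] at this
      have := add_sum_erase T N hj
      linarith
    · have := hmax (insert i T) (by rw [card_insert_of_notMem hi]; exact h)
      rw [sum_insert hi] at this
      have h0 : N i = 0 := le_antisymm (by linarith) (hN i)
      rw [h0]
      simpa using sum_nonneg fun i _ => sq_nonneg (N i)

theorem aux_l2 {ι : Type*} [Fintype ι] (v : ι → ℝ) : l2norm v = ‖WithLp.toLp 2 v‖ := by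
  rw [EuclideanSpace.norm_eq]; simp [l2norm]

theorem aux_l2_nonneg {ι : Type*} [Fintype ι] (v : ι → ℝ) : 0 ≤ l2norm v := Real.sqrt_nonneg _

theorem aux_l2_add {ι : Type*} [Fintype ι] (v w : ι → ℝ) :
    l2norm (v + w) ≤ l2norm v + l2norm w := by
  simp only [aux_l2, WithLp.toLp_add]; exact norm_add_le _ _

theorem aux_l2_neg {ι : Type*} [Fintype ι] (v : ι → ℝ) : l2norm (-v) = l2norm v := by
  simp [l2norm]

theorem aux_l2_sq {ι : Type*} [Fintype ι] (v : ι → ℝ) : l2norm v ^ 2 = v ⬝ᵥ v := by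
  rw [l2norm, Real.sq_sqrt (Finset.sum_nonneg fun i _ => sq_nonneg _)]
  simp [dotProduct, sq]

theorem aux_dot {ι : Type*} [Fintype ι] (v w : ι → ℝ) :
    |v ⬝ᵥ w| ≤ l2norm v * l2norm w := by
  have := abs_real_inner_le_norm (WithLp.toLp 2 w) (WithLp.toLp 2 v)
  rw [EuclideanSpace.inner_toLp_toLp] at this
  simp only [aux_l2]
  simpa [mul_comm] using this

theorem aux_spec {d : ℕ} (M : Matrix (Fin d) (Fin d) ℝ) (v : Fin d → ℝ) :
    l2norm (M.mulVec v) ≤ specNorm M * l2norm v := by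
  simp only [aux_l2, specNorm]
  exact (Matrix.toEuclideanCLM (𝕜 := ℝ) M).le_opNorm (WithLp.toLp 2 v)

theorem aux_coh {m l d : ℕ} (A : Matrix (Fin m) (Fin l × Fin d) ℝ) :
    0 ≤ blockCoherence A ∧ ∀ i j, i ≠ j →
      specNorm ((blk A i).transpose * blk A j) ≤ blockCoherence A := by
  refine ⟨Real.iSup_nonneg fun p => norm_nonneg _, fun i j hij => ?_⟩
  exact le_ciSup (f := fun p : {p : Fin l × Fin l // p.1 ≠ p.2} =>
    specNorm ((blk A p.1.1).transpose * blk A p.1.2)) (Set.finite_range _).bddAbove ⟨(i, j), hij⟩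

theorem aux_final_s19 (s β1 β2 lam ε w a p σ hn : ℝ) (hs : 0 < s) (hβ1 : 0 < β1) (hβ2 : 0 ≤ β2)
    (hlam : 0 < lam) (hε : 0 ≤ ε) (ha : 0 ≤ a) (hσ : 0 ≤ σ)
    (hρ : s * β2 < 1)
    (h1 : w ^ 2 - 2 * ε * w + 2 * lam * (a - s * (β1 * w + β2 * a) - 2 * σ) ≤ 0)
    (h2 : p ≤ β1 * w + β2 * a) (h3 : hn ≤ p + a / (2 * s)) :
    hn ≤ (2 * s * β1 * (s ^ 2 * β2 ^ 2 + 3 * s * β2 + 3) * lam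
          + 2 * (2 * s ^ 2 * β2 ^ 2 + 4 * s * β2 + 1) * ε)
        / (s * (1 - s * β2) * (s * β1 * lam + ε)) * σ
      + (s * β1 * (5 + 2 * s * β2) * lam
          + 2 * (2 * s ^ 2 * β2 ^ 2 + 4 * s * β2 + 1) * ε)
        * (s * β1 * lam + ε) / (s * (1 - s * β2) * lam) := by
  obtain ⟨ρ, hρd⟩ : ∃ ρ, ρ = s * β2 := ⟨_, rfl⟩
  obtain ⟨τ, hτd⟩ : ∃ τ, τ = s * β1 * lam := ⟨_, rfl⟩
  have hρ0 : 0 ≤ ρ := by rw [hρd]; positivity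
  have hτ0 : 0 < τ := by rw [hτd]; positivity
  rw [← hρd] at hρ
  have hr : 0 < 1 - ρ := by linarith
  obtain ⟨q, hq⟩ : ∃ q, q = τ + ε := ⟨_, rfl⟩
  have hq0 : 0 < q := by rw [hq]; positivity
  have h1' : w ^ 2 - 2 * q * w + 2 * lam * (1 - ρ) * a ≤ 4 * lam * σ := by
    rw [hq, hτd, hρd]; linarith
  have hw : w ≤ 2 * q + 2 * lam * σ / q := by
    by_contra hc
    push Not at hc
    have hy : 0 ≤ 2 * lam * σ / q := by positivity
    have hyq : 2 * lam * σ / q * q = 2 * lam * σ := by field_simp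
    have : 0 ≤ 2 * lam * (1 - ρ) * a := by positivity
    nlinarith
  have haa : a ≤ (2 * σ + q ^ 2 / (2 * lam)) / (1 - ρ) := by
    rw [le_div_iff₀ hr]
    have : 2 * lam * (a * (1 - ρ)) ≤ 2 * lam * (2 * σ + q ^ 2 / (2 * lam)) := by
      have : 2 * lam * (2 * σ + q ^ 2 / (2 * lam)) = 4 * lam * σ + q ^ 2 := by field_simp; ring
      rw [this]; nlinarith [sq_nonneg (w - q)]
    exact le_of_mul_le_mul_left this (by positivity)
  have hsh : s * hn ≤ τ / lam * w + (ρ + 1 / 2) * a := by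
    have e : τ / lam = s * β1 := by rw [hτd]; field_simp
    have e2 : s * (p + a / (2 * s)) = s * p + a / 2 := by field_simp
    have := mul_le_mul_of_nonneg_left h3 hs.le
    have := mul_le_mul_of_nonneg_left h2 hs.le
    rw [e, hρd]; linarith
  have hb : s * hn ≤ τ / lam * (2 * q + 2 * lam * σ / q)
      + (ρ + 1 / 2) * ((2 * σ + q ^ 2 / (2 * lam)) / (1 - ρ)) := by
    refine hsh.trans (add_le_add ?_ ?_)
    · exact mul_le_mul_of_nonneg_left hw (by positivity)
    · exact mul_le_mul_of_nonneg_left haa (by positivity)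
  have hc : τ / lam * (2 * q + 2 * lam * σ / q)
      + (ρ + 1 / 2) * ((2 * σ + q ^ 2 / (2 * lam)) / (1 - ρ)) =
      (3 * τ + ε * (2 * ρ + 1)) / ((1 - ρ) * q) * σ
      + (τ * (9 / 4 - 3 / 2 * ρ) + ε * (ρ / 2 + 1 / 4)) * q / ((1 - ρ) * lam) := by
    have : ε = q - τ := by rw [hq]; ring
    rw [this]
    field_simp
    ring
  have hg : s * ((2 * s * β1 * (s ^ 2 * β2 ^ 2 + 3 * s * β2 + 3) * lam
          + 2 * (2 * s ^ 2 * β2 ^ 2 + 4 * s * β2 + 1) * ε)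
        / (s * (1 - s * β2) * (s * β1 * lam + ε)) * σ
      + (s * β1 * (5 + 2 * s * β2) * lam
          + 2 * (2 * s ^ 2 * β2 ^ 2 + 4 * s * β2 + 1) * ε)
        * (s * β1 * lam + ε) / (s * (1 - s * β2) * lam)) =
      (2 * τ * (ρ ^ 2 + 3 * ρ + 3) + 2 * (2 * ρ ^ 2 + 4 * ρ + 1) * ε) / ((1 - ρ) * q) * σ
      + (τ * (5 + 2 * ρ) + 2 * (2 * ρ ^ 2 + 4 * ρ + 1) * ε) * q / ((1 - ρ) * lam) := by
    have e1 : s * β1 * lam + ε = q := by rw [hq, hτd]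
    have e2 : 1 - s * β2 = 1 - ρ := by rw [hρd]
    have e3 : 2 * s * β1 * (s ^ 2 * β2 ^ 2 + 3 * s * β2 + 3) * lam
          + 2 * (2 * s ^ 2 * β2 ^ 2 + 4 * s * β2 + 1) * ε =
          2 * τ * (ρ ^ 2 + 3 * ρ + 3) + 2 * (2 * ρ ^ 2 + 4 * ρ + 1) * ε := by
      rw [hτd, hρd]; ring
    have e4 : s * β1 * (5 + 2 * s * β2) * lam
          + 2 * (2 * s ^ 2 * β2 ^ 2 + 4 * s * β2 + 1) * ε =
          τ * (5 + 2 * ρ) + 2 * (2 * ρ ^ 2 + 4 * ρ + 1) * ε := by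
      rw [hτd, hρd]; ring
    rw [e1, e2, e3, e4]
    generalize 2 * τ * (ρ ^ 2 + 3 * ρ + 3) + 2 * (2 * ρ ^ 2 + 4 * ρ + 1) * ε = X
    generalize τ * (5 + 2 * ρ) + 2 * (2 * ρ ^ 2 + 4 * ρ + 1) * ε = Y
    field_simp
  refine le_of_mul_le_mul_left ?_ hs
  rw [hg]
  refine hb.trans (hc.le.trans ?_)
  have hτρ : 0 ≤ τ * ρ := by positivity
  have hτρ2 : 0 ≤ τ * ρ ^ 2 := by positivity
  have hερ : 0 ≤ ε * ρ := by positivity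
  have hερ2 : 0 ≤ ε * ρ ^ 2 := by positivity
  gcongr ?_ / _ * _ + ?_ * _ / _
  · nlinarith
  · nlinarith

theorem stmt_19 {m l d : ℕ} (A : Matrix (Fin m) (Fin l × Fin d) ℝ)
    (hA : ∀ i, (blk A i).transpose * blk A i = 1)
    (k : ℕ) (hk : 2 ≤ k)
    (hμB : blockCoherence A < 1 / ((2 * (k : ℝ) - 1) * d))
    (x : Fin l × Fin d → ℝ) (z : Fin m → ℝ) (b : Fin m → ℝ) (hb : b = A.mulVec x + z)
    (ε lam : ℝ) (hz : l2norm z ≤ ε) (hlam : 0 < lam)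
    (xs : Fin l × Fin d → ℝ)
    (hmin : ∀ u : Fin l × Fin d → ℝ,
      l21norm xs + 1 / (2 * lam) * l2norm (b - A.mulVec xs) ^ 2 ≤
        l21norm u + 1 / (2 * lam) * l2norm (b - A.mulVec u) ^ 2)
    (xk : Fin l × Fin d → ℝ) (hxk1 : blockSparse k xk)
    (hxk2 : ∀ y : Fin l × Fin d → ℝ, blockSparse k y → l2norm (xk - x) ≤ l2norm (y - x)) :
    l2norm (xs - x) ≤
      (2 * Real.sqrt k * beta1 k d (blockCoherence A) * fk k (beta2 k d (blockCoherence A)) * lam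
          + 2 * gk k (beta2 k d (blockCoherence A)) * ε)
        / (Real.sqrt k * (1 - Real.sqrt k * beta2 k d (blockCoherence A))
          * (Real.sqrt k * beta1 k d (blockCoherence A) * lam + ε)) * l21norm (x - xk)
      + (Real.sqrt k * beta1 k d (blockCoherence A)
            * (5 + 2 * Real.sqrt k * beta2 k d (blockCoherence A)) * lam
          + 2 * gk k (beta2 k d (blockCoherence A)) * ε)
        * (Real.sqrt k * beta1 k d (blockCoherence A) * lam + ε)
        / (Real.sqrt k * (1 - Real.sqrt k * beta2 k d (blockCoherence A)) * lam) := by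
  have hk' : (2 : ℝ) ≤ k := by exact_mod_cast hk
  obtain ⟨hμ0, hμ⟩ := aux_coh A
  have hd : 1 ≤ d := by
    by_contra hc
    have : d = 0 := by omega
    subst this
    simp at hμB
    linarith
  have hd' : (1 : ℝ) ≤ d := by exact_mod_cast hd
  set μ := blockCoherence A with hμd
  obtain ⟨ν, hνd⟩ : ∃ ν, ν = (d : ℝ) * μ := ⟨_, rfl⟩
  have hν0 : 0 ≤ ν := by rw [hνd]; positivity
  have hμν : μ ≤ ν := by rw [hνd]; nlinarith
  have hν1 : (2 * (k : ℝ) - 1) * ν < 1 := by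
    rw [lt_div_iff₀ (by nlinarith)] at hμB
    rw [hνd]; linarith
  have hD : 0 < 1 - ((k : ℝ) - 1) * ν := by nlinarith
  have hb1 : beta1 k d μ = √(1 + ((k : ℝ) - 1) * ν) / (1 - ((k : ℝ) - 1) * ν) := by
    rw [beta1, mul_assoc, ← hνd]
  have hb2 : beta2 k d μ = √k * ν / (1 - ((k : ℝ) - 1) * ν) := by
    rw [beta2, mul_assoc, mul_assoc, ← hνd]
  have hs2 : √(k : ℝ) ^ 2 = k := Real.sq_sqrt (by positivity)
  have hs0 : 0 < √(k : ℝ) := Real.sqrt_pos.2 (by linarith)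
  have hε : 0 ≤ ε := (aux_l2_nonneg z).trans hz
  have hβ1 : 0 < beta1 k d μ := by
    rw [hb1]
    refine div_pos (Real.sqrt_pos.2 ?_) hD
    nlinarith
  have hβ2 : 0 ≤ beta2 k d μ := by rw [hb2]; positivity
  have hρ : √(k : ℝ) * beta2 k d μ < 1 := by
    rw [hb2, ← mul_div_assoc, div_lt_one hD, ← mul_assoc, ← sq, hs2]
    linarith
  set h := xs - x with hh
  let B : (Fin l × Fin d → ℝ) → Fin l → Fin d → ℝ := fun v i j => v (i, j)
  let N : Fin l → ℝ := fun i => l2norm (B h i)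
  have hN : ∀ i, 0 ≤ N i := fun i => aux_l2_nonneg _
  let V : Fin l → EuclideanSpace ℝ (Fin m) := fun i => WithLp.toLp 2 ((blk A i).mulVec (B h i))
  have hdot : ∀ i j, ((blk A i).mulVec (B h i)) ⬝ᵥ ((blk A j).mulVec (B h j)) =
      (B h i) ⬝ᵥ (((blk A i).transpose * blk A j).mulVec (B h j)) := by
    intro i j
    rw [← Matrix.mulVec_mulVec, Matrix.dotProduct_mulVec (B h i), Matrix.vecMul_transpose]
  have hV : ∀ i, ‖V i‖ = N i := by
    intro i
    have : l2norm ((blk A i).mulVec (B h i)) ^ 2 = N i ^ 2 := by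
      rw [aux_l2_sq, hdot, hA, Matrix.one_mulVec, ← aux_l2_sq]
    rw [← aux_l2]
    exact (sq_eq_sq₀ (aux_l2_nonneg _) (hN i)).1 this
  have hVV : ∀ i j, i ≠ j → |inner ℝ (V i) (V j)| ≤ ν * N i * N j := by
    intro i j hij
    have e : inner ℝ (V i) (V j) =
        ((blk A i).mulVec (B h i)) ⬝ᵥ ((blk A j).mulVec (B h j)) := by
      rw [EuclideanSpace.inner_toLp_toLp, dotProduct_comm]; simp
    rw [e, hdot]
    refine (aux_dot _ _).trans ?_
    have h1 : l2norm (((blk A i).transpose * blk A j).mulVec (B h j)) ≤ ν * N j :=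
      (aux_spec _ _).trans (mul_le_mul_of_nonneg_right ((hμ i j hij).trans hμν) (hN j))
    have := mul_le_mul_of_nonneg_left h1 (hN i)
    linarith
  have hsum : ‖∑ i, V i‖ = l2norm (A.mulVec h) := by
    rw [aux_l2]
    congr 1
    ext r
    simp [V, B, blk, Matrix.mulVec, dotProduct, Fintype.sum_prod_type]
  have hcore : ∀ T : Finset (Fin l), T.card ≤ k → √(∑ i ∈ T, N i ^ 2) ≤
      beta1 k d μ * l2norm (A.mulVec h) + beta2 k d μ * ∑ i ∈ Tᶜ, N i := by
    intro T hT
    have := aux_core V N hN hV ν hν0 hVV k T hT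
    rw [hsum] at this
    rw [hb1, hb2, div_mul_eq_mul_div, div_mul_eq_mul_div, ← add_div, le_div_iff₀ hD]
    linarith
  obtain ⟨T, hTk, hTmin, hTtop⟩ := aux_top_s19 N hN k
  obtain ⟨S, hSd⟩ : ∃ S, S = Finset.univ.filter fun i : Fin l => (fun j => xk (i, j)) ≠ 0 :=
    ⟨_, rfl⟩
  have hSk : S.card ≤ k := by rw [hSd]; exact hxk1
  set w := l2norm (A.mulVec h) with hw
  have hw0 : 0 ≤ w := aux_l2_nonneg _
  -- consequence of minimality
  have hquad : l2norm (b - A.mulVec xs) ^ 2 ≥ w ^ 2 - 2 * ε * w + l2norm z ^ 2 := by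
    have e : b - A.mulVec xs = z - A.mulVec h := by
      rw [hb, hh, Matrix.mulVec_sub]; abel
    have h1 := (abs_le.1 (aux_dot z (A.mulVec h))).2
    have h2 := mul_le_mul_of_nonneg_right hz hw0
    have h3 : w ^ 2 = A.mulVec h ⬝ᵥ A.mulVec h := aux_l2_sq _
    rw [e, aux_l2_sq, h3, aux_l2_sq]
    simp only [sub_dotProduct, dotProduct_sub]
    rw [dotProduct_comm (A.mulVec h) z]
    linarith
  have hbx : b - A.mulVec x = z := by rw [hb]; abel
  have hm := hmin x
  rw [hbx] at hm
  set σ := l21norm (x - xk) with hσ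
  have hσ0 : 0 ≤ σ := Finset.sum_nonneg fun i _ => aux_l2_nonneg _
  have hxs : l21norm x + (∑ i ∈ Sᶜ, N i) - (∑ i ∈ S, N i) - 2 * σ ≤ l21norm xs := by
    have e1 : l21norm x = ∑ i, l2norm (B x i) := rfl
    have e2 : l21norm xs = ∑ i, l2norm (B xs i) := rfl
    have e3 : σ = ∑ i, l2norm (B (x - xk) i) := rfl
    rw [e1, e2, e3, ← Finset.sum_add_sum_compl S (fun i => l2norm (B x i)),
      ← Finset.sum_add_sum_compl S (fun i => l2norm (B xs i)),
      ← Finset.sum_add_sum_compl S (fun i => l2norm (B (x - xk) i))]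
    have f1 : ∑ i ∈ S, l2norm (B x i) ≤ ∑ i ∈ S, l2norm (B xs i) + ∑ i ∈ S, N i := by
      rw [← Finset.sum_add_distrib]
      refine Finset.sum_le_sum fun i _ => ?_
      have h2 : B x i = B xs i + -(B h i) := by
        ext j; simp [B, hh]
      have h3 := aux_l2_add (B xs i) (-(B h i))
      rw [← h2, aux_l2_neg] at h3
      exact h3
    have f2 : ∑ i ∈ Sᶜ, l2norm (B x i) + ∑ i ∈ Sᶜ, N i ≤
        ∑ i ∈ Sᶜ, l2norm (B xs i) + 2 * ∑ i ∈ Sᶜ, l2norm (B (x - xk) i) := by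
      rw [Finset.mul_sum, ← Finset.sum_add_distrib, ← Finset.sum_add_distrib]
      refine Finset.sum_le_sum fun i hi => ?_
      have h0 : (fun j => xk (i, j)) = 0 := by
        by_contra hc
        exact (Finset.mem_compl.1 hi) (by rw [hSd]; simpa using hc)
      have h1 : B (x - xk) i = B x i := by
        ext j
        have := congrFun h0 j
        simp only [Pi.zero_apply] at this
        simp [B, this]
      have h2 : B h i = B xs i + -(B x i) := by
        ext j; simp [B, hh, sub_eq_add_neg]
      have h3 := aux_l2_add (B xs i) (-(B x i))
      rw [← h2, aux_l2_neg] at h3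
      rw [h1]
      simp only [N]
      linarith
    have f3 : 0 ≤ ∑ i ∈ S, l2norm (B (x - xk) i) :=
      Finset.sum_nonneg fun i _ => aux_l2_nonneg _
    linarith
  have hSsum : ∑ i ∈ S, N i ≤ √k * (beta1 k d μ * w + beta2 k d μ * ∑ i ∈ Sᶜ, N i) := by
    refine le_trans ?_ (mul_le_mul_of_nonneg_left (hcore S hSk) hs0.le)
    rw [← Real.sqrt_mul (Nat.cast_nonneg k)]
    refine Real.le_sqrt_of_sq_le (sq_sum_le_card_mul_sum_sq.trans ?_)
    exact mul_le_mul_of_nonneg_right (by exact_mod_cast hSk)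
      (Finset.sum_nonneg fun i _ => sq_nonneg _)
  have hTa := hTmin S hSk
  set a := ∑ i ∈ Sᶜ, N i with ha
  have ha0 : 0 ≤ a := Finset.sum_nonneg fun i _ => hN i
  have hcT := hcore T hTk
  set p := √(∑ i ∈ T, N i ^ 2) with hp
  have hp0 : 0 ≤ p := Real.sqrt_nonneg _
  have hp1 : p ≤ beta1 k d μ * w + beta2 k d μ * a :=
    hcT.trans (by gcongr)
  have hn : l2norm h ≤ p + a / (2 * √k) := by
    have e : l2norm h = √(∑ i, N i ^ 2) := by
      rw [l2norm, Fintype.sum_prod_type]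
      congr 1
      refine Finset.sum_congr rfl fun i _ => ?_
      simp only [N, l2norm]
      rw [Real.sq_sqrt (Finset.sum_nonneg fun i _ => sq_nonneg _)]
    rw [e]
    refine Real.sqrt_le_iff.2 ⟨by positivity, ?_⟩
    rw [← Finset.sum_add_sum_compl T]
    have hpp : p ^ 2 = ∑ i ∈ T, N i ^ 2 :=
      Real.sq_sqrt (Finset.sum_nonneg fun i _ => sq_nonneg _)
    have hc : ∑ i ∈ Tᶜ, N i ^ 2 ≤ p / √k * a := by
      refine le_trans ?_ (mul_le_mul_of_nonneg_left hTa (by positivity))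
      rw [Finset.mul_sum]
      refine Finset.sum_le_sum fun i hi => ?_
      rw [sq]
      refine mul_le_mul_of_nonneg_right ?_ (hN i)
      rw [le_div_iff₀ hs0]
      linarith [hTtop i hi]
    have e2 : (p + a / (2 * √k)) ^ 2 = p ^ 2 + p / √k * a + (a / (2 * √k)) ^ 2 := by
      field_simp
      ring
    rw [e2, ← hpp]
    nlinarith [sq_nonneg (a / (2 * √k))]
  have h1 : w ^ 2 - 2 * ε * w
      + 2 * lam * (a - √k * (beta1 k d μ * w + beta2 k d μ * a) - 2 * σ) ≤ 0 := by
    have q1 : 1 / (2 * lam) * (w ^ 2 - 2 * ε * w + l2norm z ^ 2) ≤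
        1 / (2 * lam) * l2norm (b - A.mulVec xs) ^ 2 :=
      mul_le_mul_of_nonneg_left hquad (by positivity)
    have q2 : 1 / (2 * lam) * (w ^ 2 - 2 * ε * w)
        + (a - √k * (beta1 k d μ * w + beta2 k d μ * a) - 2 * σ) ≤ 0 := by
      rw [mul_add] at q1
      linarith
    have q3 := mul_le_mul_of_nonneg_left q2 (by positivity : 0 ≤ 2 * lam)
    rw [mul_zero, mul_add, ← mul_assoc, mul_one_div_cancel (by positivity), one_mul] at q3
    exact q3
  have := aux_final_s19 (√k) (beta1 k d μ) (beta2 k d μ) lam ε w a p σ (l2norm h)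
    hs0 hβ1 hβ2 hlam hε ha0 hσ0 hρ h1 hp1 hn
  rw [hs2] at this
  exact this
end
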